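/- arXiv:1312.1280 — 7 statements merged into one kernel-verified Lean document; each statement's English description precedes it below -/
import Mathlib

section
/- Let f : ℝ → ℝ be C¹, define F(y) = ∫₀^y s f'(s) ds, and let ε > 0 and δ ∈ ℝ. If u : ℝ × ℝ → ℝ is a C³ function satisfying the linear diffusion–dispersion equation ∂_t u + ∂_x (f ∘ u) = ε ∂_xx u + δ ε² ∂_xxx u everywhere, then everywhere: ∂_t (u²/2) + ∂_x (F ∘ u) = − ε (∂_x u)² + ε ∂_x ( u ∂_x u + δ ε ( u ∂_xx u − (∂_x u)²/2 ) ). In particular the diffusive contribution splits into a non-positive term and an exact x-derivative, while the dispersive contribution is an exact x-derivative. -/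
/-! The identity is the equation multiplied by `u`. The chain rule and `F'(y) = y f'(y)` turn the left
side into `∂_t (u²/2) + ∂_x (F ∘ u)`; on the right side,
`u u_xx = ∂_x (u u_x) - u_x²` and `u u_xxx = ∂_x (u u_xx - u_x²/2)`. -/

/-- Partial derivative in the first (time) variable. -/
noncomputable def pT (u : ℝ → ℝ → ℝ) (t x : ℝ) : ℝ := deriv (fun s => u s x) t

/-- Partial derivative in the second (space) variable. -/
noncomputable def pX (u : ℝ → ℝ → ℝ) (t x : ℝ) : ℝ := deriv (fun y => u t y) x

theorem contDiff_deriv_of_succ {g : ℝ → ℝ} {n : ℕ} (hg : ContDiff ℝ (n + 1 : ℕ) g) :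
    ContDiff ℝ n (deriv g) := by
  have h : ContDiff ℝ ((n : WithTop ℕ∞) + 1) g := by exact_mod_cast hg
  exact (contDiff_succ_iff_deriv.1 h).2.2

/-- The entropy flux `F y = ∫₀^y s f'(s) ds` has derivative `y f'(y)` at `y`, by the fundamental theorem
of calculus. -/
theorem hasDerivAt_entropyFlux {f F : ℝ → ℝ} (hf : ContDiff ℝ 1 f)
    (hF : ∀ y : ℝ, F y = ∫ s in (0:ℝ)..y, s * deriv f s) (y : ℝ) :
    HasDerivAt F (y * deriv f y) y := by
  have hc : Continuous fun s => s * deriv f s :=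
    continuous_id.mul (hf.continuous_deriv le_rfl)
  rw [funext hF]
  exact intervalIntegral.integral_hasDerivAt_right (hc.intervalIntegrable _ _)
    (hc.stronglyMeasurableAtFilter _ _) hc.continuousAt

/-- Quadratic entropy balance identity for the linear diffusion–dispersion model
`u_t + f(u)_x = ε u_xx + δ ε² u_xxx`. -/
theorem entropy_balance_linear_diffusion_dispersion
    (f : ℝ → ℝ) (hf : ContDiff ℝ 1 f)
    (F : ℝ → ℝ) (hF : ∀ y : ℝ, F y = ∫ s in (0:ℝ)..y, s * deriv f s)
    (ε δ : ℝ) (hε : 0 < ε)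
    (u : ℝ → ℝ → ℝ) (hu : ContDiff ℝ 3 (Function.uncurry u))
    (heq : ∀ t x : ℝ,
      pT u t x + pX (fun t y => f (u t y)) t x
        = ε * pX (pX u) t x + δ * ε ^ 2 * pX (pX (pX u)) t x) :
    ∀ t x : ℝ,
      pT (fun t x => (u t x) ^ 2 / 2) t x + pX (fun t x => F (u t x)) t x
        = - (ε * (pX u t x) ^ 2)
          + ε * pX (fun t y =>
              u t y * pX u t y
              + δ * ε * (u t y * pX (pX u) t y - (pX u t y) ^ 2 / 2)) t x := by
  intro t x
  have hT : HasDerivAt (fun s => u s x) (pT u t x) t := by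
    have h : ContDiff ℝ 3 fun s => u s x := hu.comp (contDiff_id.prodMk contDiff_const)
    exact (h.differentiable (by norm_num) t).hasDerivAt
  -- The spatial slice is `C³`, so each of its first three derivatives is a genuine one.
  have h0 : ContDiff ℝ (3 : ℕ) (u t) := hu.comp (contDiff_const.prodMk contDiff_id)
  have h1 : ContDiff ℝ (2 : ℕ) (pX u t) := contDiff_deriv_of_succ h0
  have h2 : ContDiff ℝ (1 : ℕ) (pX (pX u) t) := contDiff_deriv_of_succ h1
  have d0 : HasDerivAt (u t) (pX u t x) x :=
    (h0.differentiable (by norm_num) x).hasDerivAt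
  have d1 : HasDerivAt (pX u t) (pX (pX u) t x) x :=
    (h1.differentiable (by norm_num) x).hasDerivAt
  have d2 : HasDerivAt (pX (pX u) t) (pX (pX (pX u)) t x) x :=
    (h2.differentiable (by norm_num) x).hasDerivAt
  have ef : pX (fun t y => f (u t y)) t x = deriv f (u t x) * pX u t x :=
    ((hf.differentiable (by norm_num) (u t x)).hasDerivAt.comp x d0).deriv
  have eF : pX (fun t y => F (u t y)) t x = u t x * deriv f (u t x) * pX u t x :=
    ((hasDerivAt_entropyFlux hf hF (u t x)).comp x d0).deriv
  have eT : pT (fun t x => (u t x) ^ 2 / 2) t x = u t x * pT u t x := by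
    refine (((hT.fun_pow 2).div_const 2).congr_deriv ?_).deriv
    push_cast
    ring
  have eR := ((d0.mul d1).add
    (((d0.mul d2).sub ((d1.pow 2).div_const 2)).const_mul (δ * ε))).deriv
  have eR' : pX (fun t y => u t y * pX u t y
      + δ * ε * (u t y * pX (pX u) t y - (pX u t y) ^ 2 / 2)) t x = _ := eR
  rw [eT, eF, eR']
  have h := heq t x
  rw [ef] at h
  push_cast
  linear_combination u t x * h
end

section
/- Let f, b, c₁, c₂ : ℝ → ℝ be smooth with c₁ > 0 and c₂ > 0, let ε > 0, δ ∈ ℝ, and let U : ℝ → ℝ be a C² function with U'' = c₂ / c₁, and F(y) = ∫₀^y f'(s) U'(s) ds. If u : ℝ × ℝ → ℝ is a C³ function satisfying the nonlinear diffusion–dispersion equation ∂_t u + ∂_x (f ∘ u) = ε ∂_x ( b(u) ∂_x u ) + δ ε² ∂_x ( c₁(u) ∂_x ( c₂(u) ∂_x u ) ) everywhere, then everywhere: ∂_t (U ∘ u) + ∂_x (F ∘ u) = − ε b(u) U''(u) (∂_x u)² + ε ∂_x ( b(u) U'(u) ∂_x u + δ ε ( c₁(u) U'(u) ∂_x ( c₂(u)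 ∂_x u ) − (c₂(u) ∂_x u)² / 2 ) ). -/
/-- Entropy balance identity for the nonlinear diffusion–dispersion model
`u_t + f(u)_x = ε (b(u) u_x)_x + δ ε² (c₁(u) (c₂(u) u_x)_x)_x`,
with entropy `U` satisfying `U'' = c₂ / c₁`. -/
theorem entropy_balance_nonlinear_diffusion_dispersion
    (f b c₁ c₂ : ℝ → ℝ)
    (hf : ContDiff ℝ (⊤ : ℕ∞) f) (hb : ContDiff ℝ (⊤ : ℕ∞) b)
    (hc₁ : ContDiff ℝ (⊤ : ℕ∞) c₁) (hc₂ : ContDiff ℝ (⊤ : ℕ∞) c₂)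
    (hc₁pos : ∀ y : ℝ, 0 < c₁ y) (hc₂pos : ∀ y : ℝ, 0 < c₂ y)
    (ε δ : ℝ) (hε : 0 < ε)
    (U : ℝ → ℝ) (hU : ContDiff ℝ 2 U)
    (hU'' : ∀ y : ℝ, deriv (deriv U) y = c₂ y / c₁ y)
    (F : ℝ → ℝ) (hF : ∀ y : ℝ, F y = ∫ s in (0:ℝ)..y, deriv f s * deriv U s)
    (u : ℝ → ℝ → ℝ) (hu : ContDiff ℝ 3 (Function.uncurry u))
    (heq : ∀ t x : ℝ,
      pT u t x + pX (fun t y => f (u t y)) t x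
        = ε * pX (fun t y => b (u t y) * pX u t y) t x
          + δ * ε ^ 2 * pX (fun t y =>
              c₁ (u t y) * pX (fun t' y' => c₂ (u t' y') * pX u t' y') t y) t x) :
    ∀ t x : ℝ,
      pT (fun t x => U (u t x)) t x + pX (fun t x => F (u t x)) t x
        = - (ε * b (u t x) * deriv (deriv U) (u t x) * (pX u t x) ^ 2)
          + ε * pX (fun t y =>
              b (u t y) * deriv U (u t y) * pX u t y
              + δ * ε * (c₁ (u t y) * deriv U (u t y)
                    * pX (fun t' y' => c₂ (u t' y') * pX u t' y') t y
                  - (c₂ (u t y) * pX u t y) ^ 2 / 2)) t x := by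
  intro t x
  have hv : ContDiff ℝ 3 (u t) := hu.comp (contDiff_const.prodMk contDiff_id)
  have hv' : ContDiff ℝ 2 (deriv (u t)) := hv.deriv'
  have hw : ContDiff ℝ 2 (fun y => c₂ (u t y) * deriv (u t) y) :=
    ((contDiff_infty.1 hc₂ 2).comp (hv.of_le (by norm_num))).mul hv'
  have hw' : ContDiff ℝ 1 (deriv (fun y => c₂ (u t y) * deriv (u t) y)) := hw.deriv'
  have hU' : ContDiff ℝ 1 (deriv U) := hU.deriv'
  have hf' : Continuous (deriv f) := hf.continuous_deriv (by exact_mod_cast le_top)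
  have hvd := (hv.differentiable (by norm_num) x).hasDerivAt
  have htd : HasDerivAt (fun s => u s x) (pT u t x) t := by
    have h : ContDiff ℝ 3 (fun s => u s x) := hu.comp (contDiff_id.prodMk contDiff_const)
    exact (h.differentiable (by norm_num) t).hasDerivAt
  have hv'd := (hv'.differentiable (by norm_num) x).hasDerivAt
  have hwd := (hw.differentiable (by norm_num) x).hasDerivAt
  have hw'd := (hw'.differentiable (by norm_num) x).hasDerivAt
  have hUd := (hU.differentiable (by norm_num) (u t x)).hasDerivAt
  have hU'd := (hU'.differentiable (by norm_num) (u t x)).hasDerivAt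
  have hfd := (hf.differentiable (by simp) (u t x)).hasDerivAt
  have hbd := (hb.differentiable (by simp) (u t x)).hasDerivAt
  have hc₁d := (hc₁.differentiable (by simp) (u t x)).hasDerivAt
  have hFd : HasDerivAt F (deriv f (u t x) * deriv U (u t x)) (u t x) := by
    rw [funext hF]
    exact (hf'.mul hU'.continuous).integral_hasStrictDerivAt 0 (u t x) |>.hasDerivAt
  have hm := (hbd.comp x hvd).mul hv'd
  have hn := (hc₁d.comp x hvd).mul hw'd
  have hp := hU'd.comp x hvd
  have hflux := (hp.mul hm).add
    (((hp.mul hn).sub ((hwd.pow 2).div_const 2)).const_mul (δ * ε))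
  have e1 : pT (fun t x => U (u t x)) t x = deriv U (u t x) * pT u t x :=
    (hUd.comp t htd).deriv
  have e2 : pX (fun t x => F (u t x)) t x
      = deriv f (u t x) * deriv U (u t x) * deriv (u t) x := (hFd.comp x hvd).deriv
  have e3 : pX (fun t x => f (u t x)) t x = deriv f (u t x) * deriv (u t) x :=
    (hfd.comp x hvd).deriv
  have e4 : pX (fun t y => b (u t y) * pX u t y) t x = _ := hm.deriv
  have e5 : pX (fun t y =>
      c₁ (u t y) * pX (fun t' y' => c₂ (u t' y') * pX u t' y') t y) t x = _ := hn.deriv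
  have e6 : pX (fun t y => b (u t y) * deriv U (u t y) * pX u t y
      + δ * ε * (c₁ (u t y) * deriv U (u t y)
            * pX (fun t' y' => c₂ (u t' y') * pX u t' y') t y
          - (c₂ (u t y) * pX u t y) ^ 2 / 2)) t x = _ :=
    (hflux.congr_of_eventuallyEq (Filter.Eventually.of_forall fun y => by
      simp only [pX, Pi.add_apply, Pi.mul_apply, Pi.sub_apply, Pi.pow_apply,
        Function.comp_apply]
      ring)).deriv
  have h := heq t x
  have hX : pX u t x = deriv (u t) x := rfl
  rw [e3, e4, e5] at h
  rw [e1, e2, e6, hX]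
  -- The relation `c₁ U'' = c₂` turns the production `(U'(u))_x n` into `w w_x`,
  -- which is cancelled by the term `-(w ^ 2 / 2)_x` of the entropy flux.
  have hk : c₁ (u t x) * deriv (deriv U) (u t x) = c₂ (u t x) := by
    rw [hU'', mul_div_cancel₀ _ (hc₁pos _).ne']
  simp only [Function.comp_apply, Pi.mul_apply, Nat.cast_ofNat, Nat.add_one_sub_one, pow_one] at h ⊢
  rw [← hk]
  generalize deriv (fun y => c₂ (u t y) * deriv (u t) y) = W at *
  linear_combination deriv U (u t x) * h
end

section
/- Let f : ℝ → ℝ be C¹, define F(y) = ∫₀^y s f'(s) ds, and let ε > 0, δ ∈ ℝ. If u : ℝ × ℝ → ℝ is a C³ function (in (t,x)) satisfying the generalized Camassa–Holm equation ∂_t u + ∂_x (f ∘ u) = ε ∂_xx u + δ ε² ( ∂_t ∂_xx u + 2 ∂_x u ∂_xx u + u ∂_xxx u ) everywhere, then everywhere: ∂_t ( u²/2 + δ ε² (∂_x u)²/2 ) + ∂_x (F ∘ u) = − ε (∂_x u)² + ε ∂_x ( u ∂_x u + δ ε ( u ∂_t ∂_x u + u² ∂_xx u ) ). -/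
open Function

lemma hasDerivAt_time {w : ℝ → ℝ → ℝ} {t x : ℝ} (h : DifferentiableAt ℝ (uncurry w) (t, x)) :
    HasDerivAt (fun s => w s x) (fderiv ℝ (uncurry w) (t, x) (1, 0)) t :=
  HasFDerivAt.comp_hasDerivAt (f := fun s => (s, x)) t h.hasFDerivAt
    ((hasDerivAt_id t).prodMk (hasDerivAt_const t x))

lemma hasDerivAt_space {w : ℝ → ℝ → ℝ} {t x : ℝ} (h : DifferentiableAt ℝ (uncurry w) (t, x)) :
    HasDerivAt (fun y => w t y) (fderiv ℝ (uncurry w) (t, x) (0, 1)) x :=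
  HasFDerivAt.comp_hasDerivAt (f := fun y => (t, y)) x h.hasFDerivAt
    ((hasDerivAt_const x t).prodMk (hasDerivAt_id x))

lemma hasDerivAt_pT {w : ℝ → ℝ → ℝ} (h : Differentiable ℝ (uncurry w)) (t x : ℝ) :
    HasDerivAt (fun s => w s x) (pT w t x) t :=
  (hasDerivAt_time (h (t, x))).differentiableAt.hasDerivAt

lemma hasDerivAt_pX {w : ℝ → ℝ → ℝ} (h : Differentiable ℝ (uncurry w)) (t x : ℝ) :
    HasDerivAt (fun y => w t y) (pX w t x) x :=
  (hasDerivAt_space (h (t, x))).differentiableAt.hasDerivAt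

lemma uncurry_pT {w : ℝ → ℝ → ℝ} (h : Differentiable ℝ (uncurry w)) :
    uncurry (pT w) = fun p => fderiv ℝ (uncurry w) p (1, 0) := by
  ext ⟨t, x⟩
  exact (hasDerivAt_time (h (t, x))).deriv

lemma uncurry_pX {w : ℝ → ℝ → ℝ} (h : Differentiable ℝ (uncurry w)) :
    uncurry (pX w) = fun p => fderiv ℝ (uncurry w) p (0, 1) := by
  ext ⟨t, x⟩
  exact (hasDerivAt_space (h (t, x))).deriv

lemma contDiff_pT {w : ℝ → ℝ → ℝ} {m n : WithTop ℕ∞} (h : ContDiff ℝ n (uncurry w))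
    (hmn : m + 1 ≤ n) : ContDiff ℝ m (uncurry (pT w)) := by
  have hn : n ≠ 0 := by rintro rfl; simp at hmn
  rw [uncurry_pT (h.differentiable hn)]
  exact (h.fderiv_right hmn).clm_apply contDiff_const

lemma contDiff_pX {w : ℝ → ℝ → ℝ} {m n : WithTop ℕ∞} (h : ContDiff ℝ n (uncurry w))
    (hmn : m + 1 ≤ n) : ContDiff ℝ m (uncurry (pX w)) := by
  have hn : n ≠ 0 := by rintro rfl; simp at hmn
  rw [uncurry_pX (h.differentiable hn)]
  exact (h.fderiv_right hmn).clm_apply contDiff_const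

lemma pX_pT_comm {w : ℝ → ℝ → ℝ} (h : ContDiff ℝ 2 (uncurry w)) (t x : ℝ) :
    pX (pT w) t x = pT (pX w) t x := by
  have hw : Differentiable ℝ (uncurry w) := h.differentiable (by norm_num)
  have h2 : (1 : WithTop ℕ∞) + 1 ≤ 2 := by norm_num
  have hT : Differentiable ℝ (uncurry (pT w)) := (contDiff_pT h h2).differentiable one_ne_zero
  have hX : Differentiable ℝ (uncurry (pX w)) := (contDiff_pX h h2).differentiable one_ne_zero
  have hd : DifferentiableAt ℝ (fderiv ℝ (uncurry w)) (t, x) :=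
    (h.fderiv_right h2).differentiable one_ne_zero _
  have hsymm : IsSymmSndFDerivAt ℝ (uncurry w) (t, x) :=
    h.contDiffAt.isSymmSndFDerivAt (by simp)
  have e1 : pX (pT w) t x = fderiv ℝ (fderiv ℝ (uncurry w)) (t, x) (0, 1) (1, 0) := by
    rw [show pX (pT w) t x = _ from (hasDerivAt_space (hT (t, x))).deriv, uncurry_pT hw,
      fderiv_clm_apply hd (differentiableAt_const _)]
    simp
  have e2 : pT (pX w) t x = fderiv ℝ (fderiv ℝ (uncurry w)) (t, x) (1, 0) (0, 1) := by
    rw [show pT (pX w) t x = _ from (hasDerivAt_time (hX (t, x))).deriv, uncurry_pX hw,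
      fderiv_clm_apply hd (differentiableAt_const _)]
    simp
  rw [e1, e2]
  exact hsymm _ _

/-- Modified quadratic entropy balance identity for the generalized Camassa–Holm model
`u_t + f(u)_x = ε u_xx + δ ε² (u_txx + 2 u_x u_xx + u u_xxx)`. -/
theorem entropy_balance_camassa_holm
    (f : ℝ → ℝ) (hf : ContDiff ℝ 1 f)
    (F : ℝ → ℝ) (hF : ∀ y : ℝ, F y = ∫ s in (0:ℝ)..y, s * deriv f s)
    (ε δ : ℝ) (hε : 0 < ε)
    (u : ℝ → ℝ → ℝ) (hu : ContDiff ℝ 3 (Function.uncurry u))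
    (heq : ∀ t x : ℝ,
      pT u t x + pX (fun t y => f (u t y)) t x
        = ε * pX (pX u) t x
          + δ * ε ^ 2 * (pT (pX (pX u)) t x
              + 2 * pX u t x * pX (pX u) t x + u t x * pX (pX (pX u)) t x)) :
    ∀ t x : ℝ,
      pT (fun t x => (u t x) ^ 2 / 2 + δ * ε ^ 2 * (pX u t x) ^ 2 / 2) t x
        + pX (fun t x => F (u t x)) t x
        = - (ε * (pX u t x) ^ 2)
          + ε * pX (fun t y =>
              u t y * pX u t y
              + δ * ε * (u t y * pT (pX u) t y + (u t y) ^ 2 * pX (pX u) t y)) t x := by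
  intro t x
  have cX : ContDiff ℝ 2 (uncurry (pX u)) := contDiff_pX hu (by norm_num)
  have cXX : ContDiff ℝ 1 (uncurry (pX (pX u))) := contDiff_pX cX (by norm_num)
  have cTX : ContDiff ℝ 1 (uncurry (pT (pX u))) := contDiff_pT cX (by norm_num)
  have du := hu.differentiable (by norm_num)
  have dX := cX.differentiable (by norm_num)
  have dXX := cXX.differentiable one_ne_zero
  have dTX := cTX.differentiable one_ne_zero
  have ux := hasDerivAt_pX du t x
  have hFd : HasDerivAt F (u t x * deriv f (u t x)) (u t x) := by
    have hc : Continuous fun s => s * deriv f s :=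
      continuous_id.mul (hf.continuous_deriv le_rfl)
    rw [funext hF]
    exact hc.integral_hasStrictDerivAt 0 (u t x) |>.hasDerivAt
  have hFu : pX (fun t x => F (u t x)) t x = u t x * deriv f (u t x) * pX u t x :=
    (hFd.comp x ux).deriv
  have hfu : pX (fun t y => f (u t y)) t x = deriv f (u t x) * pX u t x :=
    ((hf.differentiable one_ne_zero (u t x)).hasDerivAt.comp x ux).deriv
  have hE : pT (fun t x => (u t x) ^ 2 / 2 + δ * ε ^ 2 * (pX u t x) ^ 2 / 2) t x
      = u t x * pT u t x + δ * ε ^ 2 * (pX u t x * pT (pX u) t x) := by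
    refine HasDerivAt.deriv ?_
    convert (((hasDerivAt_pT du t x).pow 2).div_const 2).add
      ((((hasDerivAt_pT dX t x).pow 2).const_mul (δ * ε ^ 2)).div_const 2) using 1
    · rfl
    push_cast
    ring
  have hR : pX (fun t y => u t y * pX u t y
        + δ * ε * (u t y * pT (pX u) t y + (u t y) ^ 2 * pX (pX u) t y)) t x
      = pX u t x ^ 2 + u t x * pX (pX u) t x
        + δ * ε * (pX u t x * pT (pX u) t x + u t x * pX (pT (pX u)) t x
          + 2 * u t x * pX u t x * pX (pX u) t x + u t x ^ 2 * pX (pX (pX u)) t x) := by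
    refine HasDerivAt.deriv ?_
    convert (ux.mul (hasDerivAt_pX dX t x)).add
      (((ux.mul (hasDerivAt_pX dTX t x)).add
        ((ux.pow 2).mul (hasDerivAt_pX dXX t x))).const_mul (δ * ε)) using 1
    · rfl
    simp only [Pi.pow_apply]
    push_cast
    ring
  have h := heq t x
  rw [hfu] at h
  rw [hE, hFu, hR, pX_pT_comm cX]
  linear_combination u t x * h
end

section
/- Let ε > 0 and α ∈ ℝ. If (v, w) : ℝ × ℝ → ℝ² is a C² pair of functions satisfying the simplified magnetohydrodynamics system with Hall effect, ∂_t v + ∂_x ( (v² + w²) v ) = ε ∂_xx v + α ε ∂_xx w and ∂_t w + ∂_x ( (v² + w²) w ) = ε ∂_xx w − α ε ∂_xx v everywhere, then everywhere: ∂_t ( (v² + w²)/2 ) + ∂_x ( (3/4) (v² + w²)² ) = − ε ( (∂_x v)² + (∂_x w)² ) + ε ∂_x ( v ∂_x v + w ∂_x w + α ( v ∂_x w − w ∂_x v ) ). In particular the Hall terms contribute only an exact x-derivative. -/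
theorem hasDerivAt_pT_s6 {u : ℝ → ℝ → ℝ} (hu : ContDiff ℝ 2 (Function.uncurry u)) (t x : ℝ) :
    HasDerivAt (fun s => u s x) (pT u t x) t := by
  have h : ContDiff ℝ 2 (fun s => u s x) :=
    hu.comp (contDiff_id.prodMk contDiff_const)
  exact (h.differentiable (by norm_num) t).hasDerivAt

theorem contDiff_slice {u : ℝ → ℝ → ℝ} (hu : ContDiff ℝ 2 (Function.uncurry u)) (t : ℝ) :
    ContDiff ℝ 2 (fun y => u t y) :=
  hu.comp (contDiff_const.prodMk contDiff_id)

theorem hasDerivAt_pX_s6 {u : ℝ → ℝ → ℝ} (hu : ContDiff ℝ 2 (Function.uncurry u)) (t x : ℝ) :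
    HasDerivAt (fun y => u t y) (pX u t x) x :=
  ((contDiff_slice hu t).differentiable (by norm_num) x).hasDerivAt

theorem hasDerivAt_pX_pX {u : ℝ → ℝ → ℝ} (hu : ContDiff ℝ 2 (Function.uncurry u)) (t x : ℝ) :
    HasDerivAt (fun y => pX u t y) (pX (pX u) t x) x := by
  have h : ContDiff ℝ 1 (deriv (fun y => u t y)) :=
    (contDiff_succ_iff_deriv.1 (show ContDiff ℝ (1 + 1) (fun y => u t y) by
      rw [one_add_one_eq_two]; exact contDiff_slice hu t)).2.2
  exact (h.differentiable (by norm_num) x).hasDerivAt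

/-- Quadratic entropy balance identity for the simplified magnetohydrodynamics
system with Hall effect:
`v_t + ((v²+w²)v)_x = ε v_xx + α ε w_xx`, `w_t + ((v²+w²)w)_x = ε w_xx − α ε v_xx`. -/
theorem entropy_balance_hall_mhd
    (ε α : ℝ) (hε : 0 < ε)
    (v w : ℝ → ℝ → ℝ)
    (hv : ContDiff ℝ 2 (Function.uncurry v)) (hw : ContDiff ℝ 2 (Function.uncurry w))
    (heq1 : ∀ t x : ℝ,
      pT v t x + pX (fun t y => ((v t y) ^ 2 + (w t y) ^ 2) * v t y) t x
        = ε * pX (pX v) t x + α * ε * pX (pX w) t x)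
    (heq2 : ∀ t x : ℝ,
      pT w t x + pX (fun t y => ((v t y) ^ 2 + (w t y) ^ 2) * w t y) t x
        = ε * pX (pX w) t x - α * ε * pX (pX v) t x) :
    ∀ t x : ℝ,
      pT (fun t x => ((v t x) ^ 2 + (w t x) ^ 2) / 2) t x
        + pX (fun t x => (3 / 4) * ((v t x) ^ 2 + (w t x) ^ 2) ^ 2) t x
        = - (ε * ((pX v t x) ^ 2 + (pX w t x) ^ 2))
          + ε * pX (fun t y =>
              v t y * pX v t y + w t y * pX w t y
              + α * (v t y * pX w t y - w t y * pX v t y)) t x := by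
  intro t x
  have hvt := hasDerivAt_pT_s6 hv t x
  have hwt := hasDerivAt_pT_s6 hw t x
  have hvx := hasDerivAt_pX_s6 hv t x
  have hwx := hasDerivAt_pX_s6 hw t x
  have hvxx := hasDerivAt_pX_pX hv t x
  have hwxx := hasDerivAt_pX_pX hw t x
  have e1 := heq1 t x
  have e2 := heq2 t x
  have hr := (hvx.fun_pow 2).fun_add (hwx.fun_pow 2)
  have f1 : pX (fun t y => ((v t y) ^ 2 + (w t y) ^ 2) * v t y) t x = _ :=
    (hr.fun_mul hvx).deriv
  have f2 : pX (fun t y => ((v t y) ^ 2 + (w t y) ^ 2) * w t y) t x = _ :=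
    (hr.fun_mul hwx).deriv
  have f3 : pT (fun t x => ((v t x) ^ 2 + (w t x) ^ 2) / 2) t x = _ :=
    (((hvt.fun_pow 2).fun_add (hwt.fun_pow 2)).div_const 2).deriv
  have f4 : pX (fun t x => (3 / 4) * ((v t x) ^ 2 + (w t x) ^ 2) ^ 2) t x = _ :=
    ((hr.fun_pow 2).const_mul (3 / 4 : ℝ)).deriv
  have f5 : pX (fun t y => v t y * pX v t y + w t y * pX w t y
      + α * (v t y * pX w t y - w t y * pX v t y)) t x = _ :=
    (((hvx.fun_mul hvxx).fun_add (hwx.fun_mul hwxx)).fun_add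
      (((hvx.fun_mul hwxx).fun_sub (hwx.fun_mul hvxx)).const_mul α)).deriv
  rw [f1] at e1
  rw [f2] at e2
  rw [f3, f4, f5]
  norm_num at e1 e2 ⊢
  linear_combination v t x * e1 + w t x * e2
end

section
/- Let f, U, F : ℝ → ℝ with U, F differentiable, U' = v, and F' = v f' (so (U,F) is an entropy pair). Define ψ = v·f − F. Let (u_i)_{i∈ℤ} be real numbers and suppose the numbers (g*_{i+1/2})_{i∈ℤ} satisfy the entropy-conservative flux relation ( v(u_{i+1}) − v(u_i) ) g*_{i+1/2} = ψ(u_{i+1}) − ψ(u_i) for all i. Define G_{i+1/2} = ( v(u_i) + v(u_{i+1}) )/2 · g*_{i+1/2} − ( ψ(u_i) + ψ(u_{i+1}) )/2. Then for every i, v(u_i) ( g*_{i+1/2} − g*_{i−1/2} ) = G_{i+1/2} − G_{i−1/2}. Consequently, if t ↦ u_i(t) are differentiable and solve the semi-discrete scheme (d/dt) u_i + ( g*_{i+1/2} − g*_{i−1/2} )/Δx = 0 (with Δx > 0), then the discrete entropy identity (d/dt) U(u_i) + ( G_{i+1/2} − G_{i−1/2} )/Δx = 0 holds for every i. -/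
/-!
Half the flux relation `[[v]] g* = [[ψ]]` turns the symmetric entropy flux `G` at either interface
of cell `i` into the one-sided form `v_i g* - ψ_i`; the term `ψ_i` is common to both interfaces and
cancels in the difference. The entropy identity is then the scheme multiplied by `v_i = U'(u_i)`,
together with the chain rule.
-/

/-- Tadmor's discrete entropy identity: if the numerical flux `g*` is entropy
conservative, i.e. `[[v]] g* = [[ψ]]` with entropy variable `v = U'`, entropy flux
`F' = v f'` and entropy potential `ψ = v f − F`, then with the numerical entropy
flux `G_{i+1/2} = (v_i + v_{i+1})/2 · g*_{i+1/2} − (ψ_i + ψ_{i+1})/2` one has the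
summation-by-parts identity `v_i (g*_{i+1/2} − g*_{i−1/2}) = G_{i+1/2} − G_{i−1/2}`,
and solutions of the semi-discrete scheme satisfy the discrete entropy identity. -/
theorem entropy_conservative_scheme_identity
    (f U F v ψ : ℝ → ℝ)
    (hf : Differentiable ℝ f) (hU : Differentiable ℝ U) (hF : Differentiable ℝ F)
    (hv : ∀ y : ℝ, deriv U y = v y)
    (hF' : ∀ y : ℝ, deriv F y = v y * deriv f y)
    (hψ : ∀ y : ℝ, ψ y = v y * f y - F y)
    (Δx : ℝ) (hΔx : 0 < Δx)
    (u : ℤ → ℝ → ℝ) (g G : ℤ → ℝ → ℝ)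
    (hg : ∀ (i : ℤ) (t : ℝ),
      (v (u (i + 1) t) - v (u i t)) * g i t = ψ (u (i + 1) t) - ψ (u i t))
    (hG : ∀ (i : ℤ) (t : ℝ),
      G i t = (v (u i t) + v (u (i + 1) t)) / 2 * g i t
        - (ψ (u i t) + ψ (u (i + 1) t)) / 2) :
    (∀ (i : ℤ) (t : ℝ),
      v (u i t) * (g i t - g (i - 1) t) = G i t - G (i - 1) t)
    ∧ ((∀ i : ℤ, Differentiable ℝ (u i)) →
        (∀ (i : ℤ) (t : ℝ), deriv (u i) t + (g i t - g (i - 1) t) / Δx = 0) →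
        ∀ (i : ℤ) (t : ℝ),
          deriv (fun s => U (u i s)) t + (G i t - G (i - 1) t) / Δx = 0) := by
  have key : ∀ (i : ℤ) (t : ℝ),
      v (u i t) * (g i t - g (i - 1) t) = G i t - G (i - 1) t := by
    intro i t
    have hl := hg (i - 1) t
    have hGl := hG (i - 1) t
    rw [sub_add_cancel] at hl hGl
    linear_combination hGl - hG i t - (hg i t + hl) / 2
  refine ⟨key, fun hu hs i t => ?_⟩
  have hd : deriv (fun s => U (u i s)) t = v (u i t) * deriv (u i) t := by
    rw [← hv]
    exact ((hU (u i t)).hasDerivAt.comp t (hu i t).hasDerivAt).deriv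
  rw [hd, ← key]
  linear_combination v (u i t) * hs i t
end

section
/- Let f : ℝ → ℝ be C¹, let U : ℝ → ℝ be C² with U''(y) > 0 for all y, set v = U', define F(y) = ∫₀^y v(s) f'(s) ds and ψ = v·f − F. Define g*(a, b) = ( ψ(b) − ψ(a) ) / ( v(b) − v(a) ) for a ≠ b (the denominator never vanishes since v is strictly monotone). Then for every a ∈ ℝ, g*(a, b) → f(a) as b → a; hence g* extends to a continuous function on ℝ × ℝ with g*(a, a) = f(a), i.e., the entropy conservative flux is a consistent numerical flux. -/
/-!
Since `F' = v f'`, the product rule gives `ψ' = v' f`. Cauchy's mean value theorem for the pair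
`ψ`, `v` (with `v' = U'' > 0`) then yields `g*(a, b) = f c` for some `c` between `a` and `b`.
Extending `g*` by `f` on the diagonal keeps this representation, so continuity at `(a, a)` follows
by squeezing `c` between `min x y` and `max x y`; off the diagonal the extension is locally a
quotient of continuous functions with nonvanishing denominator. The limit `b → a` is the
restriction of this joint continuity to the slice of fixed first argument.
-/

/-- Cauchy's mean value theorem: if `ψ' = v' f` and `v' > 0`, the difference quotient of `ψ` with
respect to `v` is a value of `f` at an intermediate point. -/
lemma exists_flux_eq_of_lt {f v v' ψ : ℝ → ℝ} (hv : ∀ y, HasDerivAt v (v' y) y)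
    (hψ : ∀ y, HasDerivAt ψ (v' y * f y) y) (hpos : ∀ y, 0 < v' y) (hmono : StrictMono v)
    {a b : ℝ} (hab : a < b) :
    ∃ c, a ≤ c ∧ c ≤ b ∧ (ψ b - ψ a) / (v b - v a) = f c := by
  obtain ⟨c, hc, h⟩ := exists_ratio_hasDerivAt_eq_ratio_slope ψ (fun y => v' y * f y) hab
    (fun y _ => (hψ y).continuousAt.continuousWithinAt) (fun y _ => hψ y) v v'
    (fun y _ => (hv y).continuousAt.continuousWithinAt) (fun y _ => hv y)
  refine ⟨c, hc.1.le, hc.2.le, ?_⟩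
  have h1 : v b - v a ≠ 0 := (sub_pos.2 (hmono hab)).ne'
  rw [div_eq_iff h1]
  apply mul_right_cancel₀ (hpos c).ne'
  linarith

/-- Consistency of the entropy conservative flux: with a strictly convex entropy `U`,
entropy variable `v = U'`, entropy flux `F' = v f'` and entropy potential
`ψ = v f − F`, the two-point entropy conservative flux
`g*(a,b) = (ψ(b) − ψ(a))/(v(b) − v(a))` (for `a ≠ b`) satisfies `g*(a,b) → f(a)`
as `b → a`, and extends to a continuous function on `ℝ × ℝ` with `g*(a,a) = f(a)`. -/
theorem entropy_conservative_flux_consistent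
    (f U : ℝ → ℝ) (hf : ContDiff ℝ 1 f) (hU : ContDiff ℝ 2 U)
    (hU'' : ∀ y : ℝ, 0 < deriv (deriv U) y)
    (v F ψ : ℝ → ℝ)
    (hv : ∀ y : ℝ, v y = deriv U y)
    (hF : ∀ y : ℝ, F y = ∫ s in (0:ℝ)..y, v s * deriv f s)
    (hψ : ∀ y : ℝ, ψ y = v y * f y - F y)
    (gstar : ℝ → ℝ → ℝ)
    (hgstar : ∀ a b : ℝ, a ≠ b → gstar a b = (ψ b - ψ a) / (v b - v a)) :
    (∀ a : ℝ,
      Filter.Tendsto (fun b => gstar a b) (nhdsWithin a {a}ᶜ) (nhds (f a)))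
    ∧ ∃ G : ℝ → ℝ → ℝ,
        Continuous (Function.uncurry G)
        ∧ (∀ a b : ℝ, a ≠ b → G a b = gstar a b)
        ∧ (∀ a : ℝ, G a a = f a) := by
  have hv_eq : v = deriv U := funext hv
  have hv1 : ContDiff ℝ 1 v := by
    rw [hv_eq]
    exact ((contDiff_succ_iff_deriv (n := 1)).1 (by simpa [one_add_one_eq_two] using hU)).2.2
  have hpos : ∀ y, 0 < deriv v y := by rw [hv_eq]; exact hU''
  have hvc : Continuous v := hv1.continuous
  have hfc : Continuous f := hf.continuous
  have hvd : ∀ y, HasDerivAt v (deriv v y) y := fun y =>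
    (hv1.differentiable one_ne_zero y).hasDerivAt
  have hfd : ∀ y, HasDerivAt f (deriv f y) y := fun y =>
    (hf.differentiable one_ne_zero y).hasDerivAt
  have hFd : ∀ y, HasDerivAt F (v y * deriv f y) y := by
    intro y
    have hc : Continuous fun s => v s * deriv f s := hvc.mul (hf.continuous_deriv le_rfl)
    rw [funext hF]
    exact hc.integral_hasStrictDerivAt 0 y |>.hasDerivAt
  have hψd : ∀ y, HasDerivAt ψ (deriv v y * f y) y := by
    intro y
    rw [funext hψ]
    exact (((hvd y).mul (hfd y)).sub (hFd y)).congr_deriv (by ring)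
  have hψc : Continuous ψ := continuous_iff_continuousAt.2 fun y => (hψd y).continuousAt
  have hmono : StrictMono v := strictMono_of_deriv_pos hpos
  let G : ℝ → ℝ → ℝ := fun a b => if a = b then f a else gstar a b
  have hGne : ∀ a b : ℝ, a ≠ b → G a b = gstar a b := fun a b h => if_neg h
  have hGdiag : ∀ a : ℝ, G a a = f a := fun a => if_pos rfl
  have hmean : ∀ p : ℝ × ℝ, ∃ c, min p.1 p.2 ≤ c ∧ c ≤ max p.1 p.2 ∧
      Function.uncurry G p = f c := by
    rintro ⟨a, b⟩
    simp only [Function.uncurry_apply_pair]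
    rcases lt_trichotomy a b with h | rfl | h
    · rw [hGne a b h.ne, hgstar a b h.ne, min_eq_left h.le, max_eq_right h.le]
      exact exists_flux_eq_of_lt hvd hψd hpos hmono h
    · exact ⟨a, by simp, by simp, hGdiag a⟩
    · rw [hGne a b h.ne', hgstar a b h.ne', min_eq_right h.le, max_eq_left h.le,
        ← neg_sub (ψ a), ← neg_sub (v a), neg_div_neg_eq]
      exact exists_flux_eq_of_lt hvd hψd hpos hmono h
  have hG : Continuous (Function.uncurry G) := by
    rw [continuous_iff_continuousAt]
    rintro ⟨a, b⟩
    by_cases hab : a = b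
    · subst hab
      choose c hc_min hc_max hc using hmean
      have hmin : Filter.Tendsto (fun p : ℝ × ℝ => min p.1 p.2) (nhds (a, a)) (nhds a) := by
        simpa using (continuous_fst.min continuous_snd).tendsto ((a, a) : ℝ × ℝ)
      have hmax : Filter.Tendsto (fun p : ℝ × ℝ => max p.1 p.2) (nhds (a, a)) (nhds a) := by
        simpa using (continuous_fst.max continuous_snd).tendsto ((a, a) : ℝ × ℝ)
      have hca : Filter.Tendsto c (nhds (a, a)) (nhds a) :=
        tendsto_of_tendsto_of_tendsto_of_le_of_le hmin hmax hc_min hc_max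
      have hlim := (hfc.tendsto a).comp hca
      rw [ContinuousAt, Function.uncurry_apply_pair, hGdiag, funext hc]
      exact hlim
    · have hquot : ContinuousAt (fun p : ℝ × ℝ => (ψ p.2 - ψ p.1) / (v p.2 - v p.1)) (a, b) := by
        apply ContinuousAt.div
        · fun_prop
        · fun_prop
        · exact sub_ne_zero.2 fun h => hab (hmono.injective h).symm
      refine hquot.congr ?_
      filter_upwards [(isOpen_ne_fun continuous_fst continuous_snd).mem_nhds
        (show ((a, b) : ℝ × ℝ) ∈ {p : ℝ × ℝ | p.1 ≠ p.2} from hab)] with p hp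
      exact ((hGne p.1 p.2 hp).trans (hgstar p.1 p.2 hp)).symm
  refine ⟨fun a => ?_, G, hG, hGne, hGdiag⟩
  have hslice : Continuous fun b => G a b := hG.comp (Continuous.prodMk_right a)
  have hlim : Filter.Tendsto (fun b => G a b) (nhdsWithin a {a}ᶜ) (nhds (f a)) := by
    rw [← hGdiag a]
    exact (hslice.tendsto a).mono_left nhdsWithin_le_nhds
  refine hlim.congr' ?_
  filter_upwards [self_mem_nhdsWithin] with b hb
  exact hGne a b fun h => hb h.symm
end

section
/- For each integer p ≥ 1 let (α^p_{−p}, …, α^p_p) ∈ ℝ^{2p+1} be the unique solution of the 2p-order conditions Σ_{j=−p}^{p} j α^p_j = 1 and Σ_{j=−p}^{p} j^l α^p_j = 0 for l ≠ 1, 0 ≤ l ≤ 2p (convention 0⁰ = 1), and define the tail sum Ŝ^f_p = Σ_{k=2p+1}^{∞} | Σ_{j=−p}^{p} α^p_j j^k / k! | (the series converges since |Σ_j α^p_j j^k|/k! ≤ (Σ_j |α^p_j|) p^k / k!). Then Ŝ^f_p → 0 as p → ∞. -/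
/-!
The idea is the classical error formula for interpolatory differentiation.  Let
`D q = q'(0) - ∑ i, α p i * q (i - p)`.  The order conditions say that `D` kills every polynomial
of degree at most `2p` (`diffError_eq_zero`).  Let `ω j` be the Newton polynomials for the nodes
`-p, …, p, 0` (the node `0` is repeated at the end).  Then `D` also kills all multiples of
`ω (2p+2)`, while `|D (ω (2p+1))| = (p!)²`, since `ω (2p+1) = ∏ (X - j)` vanishes at every node
and its derivative at `0` is `± (p!)²`.

The relation `X ^ (n+1) * ω j = X ^ n * ω (j+1) + a j * X ^ n * ω j` and `|a j| ≤ p` give by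
induction (`diffError_bound`) the Pascal-type bound
`|D (X ^ n)| ≤ (p!)² * (n choose 2p+1) * p ^ (n - 2p - 1)`.  For `k ≥ 2` the derivative of `X ^ k`
at `0` vanishes, so this bounds the `k`-th moment of `α p`; dividing by `k!` and summing, the tail
sum is at most `(p!)² / (2p+1)! * exp p ≤ (exp 1 / 4) ^ p`, which tends to `0` because `e < 4`.
-/

open Polynomial

/-- The error at `0`, on a polynomial `q`, of the differentiation rule with weights `a i` at the
nodes `i - p`. -/
noncomputable def diffError (p : ℕ) (a : Fin (2 * p + 1) → ℝ) (q : ℝ[X]) : ℝ :=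
  q.derivative.eval 0 - ∑ i : Fin (2 * p + 1), a i * q.eval ((i.val : ℝ) - (p : ℝ))

/-- The nodes `-p, …, p`, followed by the repeated node `0`; the value `0` beyond index `2p+1` is
irrelevant. -/
noncomputable def stencilNode (p j : ℕ) : ℝ := if j ≤ 2 * p then (j : ℝ) - p else 0

/-- The Newton polynomial `∏_{i < j} (X - a_i)` for the nodes `stencilNode p`. -/
noncomputable def newtonPoly (p j : ℕ) : ℝ[X] :=
  ∏ i ∈ Finset.range j, (X - C (stencilNode p i))

lemma diffError_add (p : ℕ) (a : Fin (2 * p + 1) → ℝ) (q r : ℝ[X]) :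
    diffError p a (q + r) = diffError p a q + diffError p a r := by
  simp only [diffError, derivative_add, eval_add, mul_add, Finset.sum_add_distrib]
  ring

lemma diffError_C_mul (p : ℕ) (a : Fin (2 * p + 1) → ℝ) (c : ℝ) (q : ℝ[X]) :
    diffError p a (C c * q) = c * diffError p a q := by
  simp only [diffError, derivative_C_mul, eval_mul, eval_C, mul_sub, Finset.mul_sum]
  congr 1
  exact Finset.sum_congr rfl fun i _ => by ring

lemma diffError_sum (p : ℕ) (a : Fin (2 * p + 1) → ℝ) (s : Finset ℕ) (f : ℕ → ℝ[X]) :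
    diffError p a (∑ n ∈ s, f n) = ∑ n ∈ s, diffError p a (f n) := by
  induction s using Finset.induction_on with
  | empty => simp [diffError]
  | insert n s hn ih => rw [Finset.sum_insert hn, Finset.sum_insert hn, diffError_add, ih]

/-- The order conditions express exactness of the rule on polynomials of degree at most `2p`. -/
lemma diffError_eq_zero {p : ℕ} {a : Fin (2 * p + 1) → ℝ}
    (h1 : ∑ i : Fin (2 * p + 1), ((i.val : ℝ) - (p : ℝ)) * a i = 1)
    (h2 : ∀ l : ℕ, l ≤ 2 * p → l ≠ 1 →
      ∑ i : Fin (2 * p + 1), ((i.val : ℝ) - (p : ℝ)) ^ l * a i = 0)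
    {q : ℝ[X]} (hq : q.natDegree ≤ 2 * p) : diffError p a q = 0 := by
  rw [q.as_sum_range_C_mul_X_pow, diffError_sum]
  refine Finset.sum_eq_zero fun l hl => ?_
  rw [Finset.mem_range] at hl
  rw [diffError_C_mul]
  have key : diffError p a (X ^ l) = 0 := by
    have hsum : ∑ i : Fin (2 * p + 1), a i * (X ^ l : ℝ[X]).eval ((i.val : ℝ) - (p : ℝ))
        = ∑ i : Fin (2 * p + 1), ((i.val : ℝ) - (p : ℝ)) ^ l * a i :=
      Finset.sum_congr rfl fun i _ => by simp [mul_comm]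
    unfold diffError
    rw [hsum]
    by_cases hl1 : l = 1
    · subst hl1
      simp [h1]
    · rw [h2 l (by omega) hl1]
      rcases l with _ | _ | l
      · simp
      · omega
      · simp
  rw [key, mul_zero]

lemma newtonPoly_succ (p j : ℕ) :
    newtonPoly p (j + 1) = newtonPoly p j * (X - C (stencilNode p j)) :=
  Finset.prod_range_succ _ _

lemma newtonPoly_natDegree (p j : ℕ) : (newtonPoly p j).natDegree = j := by
  unfold newtonPoly
  rw [natDegree_prod_of_monic _ _ fun i _ => monic_X_sub_C _]
  simp

lemma newtonPoly_eval_node (p : ℕ) (i : Fin (2 * p + 1)) :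
    (newtonPoly p (2 * p + 1)).eval ((i.val : ℝ) - (p : ℝ)) = 0 := by
  unfold newtonPoly
  rw [eval_prod]
  refine Finset.prod_eq_zero (Finset.mem_range.2 i.2) ?_
  have : i.val ≤ 2 * p := by omega
  simp [stencilNode, this]

lemma abs_stencilNode_le (p j : ℕ) : |stencilNode p j| ≤ p := by
  unfold stencilNode
  split_ifs with h
  · have : (j : ℝ) ≤ 2 * p := by exact_mod_cast h
    rw [abs_le]
    constructor <;> linarith [(Nat.cast_nonneg j : (0 : ℝ) ≤ j)]
  · simp

/-- The middle factor of `∏_{|j| ≤ p} (X - j)` is `X`. -/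
lemma newtonPoly_factor (p : ℕ) :
    newtonPoly p (2 * p + 1) =
      X * ((∏ i ∈ Finset.range p, (X - C ((i : ℝ) - p))) *
        ∏ i ∈ Finset.range p, (X - C ((i : ℝ) + 1))) := by
  have hp : 2 * p + 1 = p + 1 + p := by ring
  unfold newtonPoly
  rw [hp, Finset.prod_range_add, Finset.prod_range_succ]
  have e1 : ∏ i ∈ Finset.range p, (X - C (stencilNode p i))
      = ∏ i ∈ Finset.range p, (X - C ((i : ℝ) - p)) := by
    refine Finset.prod_congr rfl fun i hi => ?_
    rw [Finset.mem_range] at hi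
    rw [stencilNode, if_pos (by omega)]
  have e2 : ∏ i ∈ Finset.range p, (X - C (stencilNode p (p + 1 + i)))
      = ∏ i ∈ Finset.range p, (X - C ((i : ℝ) + 1)) := by
    refine Finset.prod_congr rfl fun i hi => ?_
    rw [Finset.mem_range] at hi
    rw [stencilNode, if_pos (by omega)]
    congr 2
    push_cast
    ring
  have e3 : stencilNode p p = 0 := by
    rw [stencilNode, if_pos (by omega), sub_self]
  rw [e1, e2, e3, C_0, sub_zero]
  ring

lemma abs_diffError_newtonPoly (p : ℕ) (a : Fin (2 * p + 1) → ℝ) :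
    |diffError p a (newtonPoly p (2 * p + 1))| = (p.factorial : ℝ) ^ 2 := by
  have hs : ∑ i : Fin (2 * p + 1),
      a i * (newtonPoly p (2 * p + 1)).eval ((i.val : ℝ) - (p : ℝ)) = 0 :=
    Finset.sum_eq_zero fun i _ => by rw [newtonPoly_eval_node, mul_zero]
  have hfac : ∏ i ∈ Finset.range p, ((i : ℝ) + 1) = p.factorial := by
    rw [← Finset.prod_range_add_one_eq_factorial]
    push_cast
    rfl
  unfold diffError
  rw [hs, sub_zero, newtonPoly_factor, derivative_mul, derivative_X, one_mul, eval_add, eval_mul,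
    eval_mul, eval_X, zero_mul, add_zero, eval_prod, eval_prod, abs_mul, Finset.abs_prod,
    Finset.abs_prod, sq]
  congr 1
  · rw [← hfac, ← Finset.prod_range_reflect]
    refine Finset.prod_congr rfl fun i hi => ?_
    rw [Finset.mem_range] at hi
    have hi' : ((p - 1 - i : ℕ) : ℝ) = p - 1 - i := by
      rw [Nat.cast_sub (by omega), Nat.cast_sub (by omega)]
      simp
    have hpos : (0 : ℝ) ≤ (i : ℝ) + 1 := by positivity
    rw [eval_sub, eval_X, eval_C, hi',
      show (0 : ℝ) - (p - 1 - i - p) = i + 1 by ring, abs_of_nonneg hpos]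
  · rw [← hfac]
    refine Finset.prod_congr rfl fun i _ => ?_
    have hpos : (0 : ℝ) ≤ (i : ℝ) + 1 := by positivity
    rw [eval_sub, eval_X, eval_C, zero_sub, abs_neg, abs_of_nonneg hpos]

/-- The error vanishes on `X ^ (n+1) * ∏_{|j| ≤ p} (X - j)`, which has value `0` at all nodes and
a double zero at `0`. -/
lemma diffError_X_pow_mul_newtonPoly (p : ℕ) (a : Fin (2 * p + 1) → ℝ) (n : ℕ) :
    diffError p a (X ^ (n + 1) * newtonPoly p (2 * p + 1)) = 0 := by
  have hs : ∑ i : Fin (2 * p + 1),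
      a i * (X ^ (n + 1) * newtonPoly p (2 * p + 1)).eval ((i.val : ℝ) - (p : ℝ)) = 0 :=
    Finset.sum_eq_zero fun i _ => by rw [eval_mul, newtonPoly_eval_node, mul_zero, mul_zero]
  have h0 : (newtonPoly p (2 * p + 1)).eval 0 = 0 := by
    rw [newtonPoly_factor, eval_mul, eval_X, zero_mul]
  unfold diffError
  rw [hs, sub_zero, derivative_mul, eval_add, eval_mul, eval_mul, h0]
  simp

lemma diffError_recurrence (p : ℕ) (a : Fin (2 * p + 1) → ℝ) (n j : ℕ) :
    diffError p a (X ^ (n + 1) * newtonPoly p j) =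
      diffError p a (X ^ n * newtonPoly p (j + 1)) +
        stencilNode p j * diffError p a (X ^ n * newtonPoly p j) := by
  rw [← diffError_C_mul, ← diffError_add, newtonPoly_succ]
  congr 1
  ring

/-- Pascal-type bound for the error on `X ^ n * ω j` with `j + r = 2p + 1`.  The factor `p ^ r` on
the left avoids the exponent `n - r` on the right. -/
lemma diffError_bound {p : ℕ} {a : Fin (2 * p + 1) → ℝ}
    (h1 : ∑ i : Fin (2 * p + 1), ((i.val : ℝ) - (p : ℝ)) * a i = 1)
    (h2 : ∀ l : ℕ, l ≤ 2 * p → l ≠ 1 →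
      ∑ i : Fin (2 * p + 1), ((i.val : ℝ) - (p : ℝ)) ^ l * a i = 0)
    (n : ℕ) : ∀ r j : ℕ, j + r = 2 * p + 1 →
      (p : ℝ) ^ r * |diffError p a (X ^ n * newtonPoly p j)|
        ≤ (p.factorial : ℝ) ^ 2 * n.choose r * (p : ℝ) ^ n := by
  induction n with
  | zero =>
    intro r j hj
    rcases r with _ | r
    · obtain rfl : j = 2 * p + 1 := by omega
      simp [abs_diffError_newtonPoly]
    · have hd : diffError p a (newtonPoly p j) = 0 :=
        diffError_eq_zero h1 h2 (by rw [newtonPoly_natDegree]; omega)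
      simp [hd]
  | succ n ih =>
    intro r j hj
    rcases r with _ | r
    · obtain rfl : j = 2 * p + 1 := by omega
      rw [diffError_X_pow_mul_newtonPoly, abs_zero, mul_zero]
      positivity
    · have i1 := ih r (j + 1) (by omega)
      have i2 := ih (r + 1) j hj
      have hp : (0 : ℝ) ≤ p := Nat.cast_nonneg p
      rw [diffError_recurrence]
      set u := diffError p a (X ^ n * newtonPoly p (j + 1))
      set v := diffError p a (X ^ n * newtonPoly p j)
      have hv : |u + stencilNode p j * v| ≤ |u| + p * |v| := by
        refine (abs_add_le _ _).trans ?_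
        rw [abs_mul]
        gcongr
        exact abs_stencilNode_le p j
      calc (p : ℝ) ^ (r + 1) * |u + stencilNode p j * v|
          ≤ (p : ℝ) ^ (r + 1) * (|u| + p * |v|) := by gcongr
        _ = p * ((p : ℝ) ^ r * |u|) + p * ((p : ℝ) ^ (r + 1) * |v|) := by ring
        _ ≤ p * ((p.factorial : ℝ) ^ 2 * n.choose r * (p : ℝ) ^ n)
            + p * ((p.factorial : ℝ) ^ 2 * n.choose (r + 1) * (p : ℝ) ^ n) := by gcongr
        _ = (p.factorial : ℝ) ^ 2 * (n + 1).choose (r + 1) * (p : ℝ) ^ (n + 1) := by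
            rw [Nat.choose_succ_succ]
            push_cast
            ring

/-- Each term of the tail is at most the corresponding term of
`(p!)² / (2p+1)! * ∑ k, p ^ k / k!`. -/
lemma tail_term_bound {p : ℕ} (hp : 1 ≤ p) {a : Fin (2 * p + 1) → ℝ}
    (h1 : ∑ i : Fin (2 * p + 1), ((i.val : ℝ) - (p : ℝ)) * a i = 1)
    (h2 : ∀ l : ℕ, l ≤ 2 * p → l ≠ 1 →
      ∑ i : Fin (2 * p + 1), ((i.val : ℝ) - (p : ℝ)) ^ l * a i = 0) (k : ℕ) :
    |(∑ i : Fin (2 * p + 1), a i * ((i.val : ℝ) - (p : ℝ)) ^ (k + 2 * p + 1))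
          / (Nat.factorial (k + 2 * p + 1) : ℝ)|
      ≤ (p.factorial : ℝ) ^ 2 / (2 * p + 1).factorial * ((p : ℝ) ^ k / k.factorial) := by
  have hb := diffError_bound h1 h2 (k + 2 * p + 1) (2 * p + 1) 0 (by omega)
  have hne : k + 2 * p ≠ 0 := by omega
  have hd : diffError p a (X ^ (k + 2 * p + 1) * newtonPoly p 0)
      = -∑ i : Fin (2 * p + 1), a i * ((i.val : ℝ) - (p : ℝ)) ^ (k + 2 * p + 1) := by
    simp only [diffError, newtonPoly, Finset.range_zero, Finset.prod_empty, mul_one,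
      derivative_X_pow, eval_mul, eval_pow, eval_X, eval_C, Nat.add_sub_cancel, zero_pow hne,
      mul_zero, zero_sub]
  rw [hd, abs_neg] at hb
  set M := ∑ i : Fin (2 * p + 1), a i * ((i.val : ℝ) - (p : ℝ)) ^ (k + 2 * p + 1)
  have hpp : (0 : ℝ) < (p : ℝ) ^ (2 * p + 1) := by
    have : (0 : ℝ) < p := by exact_mod_cast hp
    positivity
  have hM : |M| ≤ (p.factorial : ℝ) ^ 2 * (k + 2 * p + 1).choose (2 * p + 1) * (p : ℝ) ^ k := by
    refine le_of_mul_le_mul_left (hb.trans_eq ?_) hpp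
    rw [add_assoc, pow_add]
    ring
  have hch : ((k + 2 * p + 1).choose (2 * p + 1) : ℝ) * (2 * p + 1).factorial * k.factorial
      = (k + 2 * p + 1).factorial := by
    have := Nat.choose_mul_factorial_mul_factorial (show 2 * p + 1 ≤ k + 2 * p + 1 by omega)
    rw [show k + 2 * p + 1 - (2 * p + 1) = k by omega] at this
    exact_mod_cast this
  have f1 : (0 : ℝ) < (2 * p + 1).factorial := by exact_mod_cast Nat.factorial_pos _
  have f2 : (0 : ℝ) < k.factorial := by exact_mod_cast Nat.factorial_pos _
  have f3 : (0 : ℝ) < (k + 2 * p + 1).factorial := by exact_mod_cast Nat.factorial_pos _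
  rw [abs_div, abs_of_pos f3, div_mul_div_comm, div_le_div_iff₀ f3 (mul_pos f1 f2)]
  calc |M| * (((2 * p + 1).factorial : ℝ) * k.factorial)
      ≤ (p.factorial : ℝ) ^ 2 * (k + 2 * p + 1).choose (2 * p + 1) * (p : ℝ) ^ k
        * (((2 * p + 1).factorial : ℝ) * k.factorial) := by gcongr
    _ = (p.factorial : ℝ) ^ 2 * (p : ℝ) ^ k * (k + 2 * p + 1).factorial := by
        rw [← hch]
        ring

lemma factorial_sq_div_le {p : ℕ} (hp : 1 ≤ p) :
    (p.factorial : ℝ) ^ 2 / (2 * p + 1).factorial ≤ (1 / 4) ^ p := by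
  have hc : (p.centralBinom : ℝ) * (p.factorial : ℝ) ^ 2 = (2 * p).factorial := by
    have := Nat.choose_mul_factorial_mul_factorial (show p ≤ 2 * p by omega)
    rw [show 2 * p - p = p by omega, ← Nat.centralBinom_eq_two_mul_choose] at this
    rw [← this]
    push_cast
    ring
  have h4 : (4 : ℝ) ^ p ≤ 2 * p * p.centralBinom := by
    exact_mod_cast Nat.four_pow_le_two_mul_self_mul_centralBinom p hp
  have hcb : (0 : ℝ) ≤ p.centralBinom := Nat.cast_nonneg _
  have f1 : (0 : ℝ) < (2 * p + 1).factorial := by exact_mod_cast Nat.factorial_pos _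
  rw [one_div_pow, div_le_div_iff₀ f1 (by positivity), Nat.factorial_succ]
  push_cast
  rw [← hc]
  have : (4 : ℝ) ^ p ≤ (2 * p + 1) * p.centralBinom := by linarith
  nlinarith [mul_le_mul_of_nonneg_left this (sq_nonneg (p.factorial : ℝ))]

/-- Vanishing of the tail sums `Ŝ^f_p` as `p → ∞`: if for each `p ≥ 1` the
coefficients `α^p_j` (`j = i − p`, `i : Fin (2p+1)`) satisfy the `2p`-order
conditions, then the tail sums
`Ŝ^f_p = Σ_{k≥2p+1} |Σ_j α^p_j j^k / k!|` are well defined (the series converge)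
and tend to `0` as `p → ∞`. -/
theorem tail_sums_tendsto_zero
    (α : (p : ℕ) → Fin (2 * p + 1) → ℝ)
    (h1 : ∀ p : ℕ, 1 ≤ p →
      ∑ i : Fin (2 * p + 1), ((i.val : ℝ) - (p : ℝ)) * α p i = 1)
    (h2 : ∀ p : ℕ, 1 ≤ p → ∀ l : ℕ, l ≤ 2 * p → l ≠ 1 →
      ∑ i : Fin (2 * p + 1), ((i.val : ℝ) - (p : ℝ)) ^ l * α p i = 0) :
    (∀ p : ℕ, 1 ≤ p →
      Summable (fun k : ℕ =>
        |(∑ i : Fin (2 * p + 1), α p i * ((i.val : ℝ) - (p : ℝ)) ^ (k + 2 * p + 1))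
          / (Nat.factorial (k + 2 * p + 1) : ℝ)|))
    ∧ Filter.Tendsto (fun p : ℕ =>
        ∑' k : ℕ,
          |(∑ i : Fin (2 * p + 1), α p i * ((i.val : ℝ) - (p : ℝ)) ^ (k + 2 * p + 1))
            / (Nat.factorial (k + 2 * p + 1) : ℝ)|)
        Filter.atTop (nhds 0) := by
  have hexp : ∀ p : ℕ, HasSum (fun k : ℕ => (p.factorial : ℝ) ^ 2 / (2 * p + 1).factorial *
      ((p : ℝ) ^ k / k.factorial))
      ((p.factorial : ℝ) ^ 2 / (2 * p + 1).factorial * Real.exp p) := by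
    intro p
    rw [Real.exp_eq_exp_ℝ]
    exact (NormedSpace.expSeries_div_hasSum_exp (p : ℝ)).mul_left _
  have hsum : ∀ p : ℕ, 1 ≤ p → Summable (fun k : ℕ =>
      |(∑ i : Fin (2 * p + 1), α p i * ((i.val : ℝ) - (p : ℝ)) ^ (k + 2 * p + 1))
        / (Nat.factorial (k + 2 * p + 1) : ℝ)|) := fun p hp =>
    Summable.of_nonneg_of_le (fun k => abs_nonneg _)
      (tail_term_bound hp (h1 p hp) (h2 p hp)) (hexp p).summable
  refine ⟨hsum, ?_⟩
  have hlim : Filter.Tendsto (fun p : ℕ => (Real.exp 1 / 4) ^ p) Filter.atTop (nhds 0) :=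
    tendsto_pow_atTop_nhds_zero_of_lt_one (by positivity)
      (by linarith [Real.exp_one_lt_three])
  refine tendsto_of_tendsto_of_tendsto_of_le_of_le' tendsto_const_nhds hlim
    (Filter.Eventually.of_forall fun p => tsum_nonneg fun k => abs_nonneg _) ?_
  filter_upwards [Filter.eventually_ge_atTop 1] with p hp
  calc _ ≤ (p.factorial : ℝ) ^ 2 / (2 * p + 1).factorial * Real.exp p := by
        rw [← (hexp p).tsum_eq]
        exact (hsum p hp).tsum_le_tsum (tail_term_bound hp (h1 p hp) (h2 p hp)) (hexp p).summable
    _ ≤ (1 / 4) ^ p * Real.exp p := by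
        gcongr
        exact factorial_sq_div_le hp
    _ = (Real.exp 1 / 4) ^ p := by
        rw [← Real.exp_one_pow, ← mul_pow]
        ring
end
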